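/- Let X be a pure finite n-dimensional simplicial complex and let a finite group G act simplicially on X, transitively on X(n). Define M_{-1} = 1 and M_k = Fill_k((k+1)·M_{k-1} + 1) for 0 ≤ k ≤ n−1. Fix 0 ≤ k ≤ n−1. If Sys_j(X) > (j+1)·M_{j-1} + 1 for every 0 ≤ j ≤ k, then Exp^k_b(X) ≥ 1/(C(n+1,k+1)·M_k). -/

import Mathlib

open Finset

/-- A finite simplicial complex on vertex type `V`. -/
structure SCplx (V : Type) [DecidableEq V] where
  faces : Finset (Finset V)
  empty_mem : ∅ ∈ faces
  down_closed : ∀ σ ∈ faces, ∀ τ ⊆ σ, τ ∈ faces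

namespace SCplx

variable {V : Type} [DecidableEq V]

/-- Faces of cardinality `m`, i.e. the faces in `X(m-1)`. -/
def cfaces (X : SCplx V) (m : ℕ) : Finset (Finset V) :=
  X.faces.filter fun σ => σ.card = m

/-- `X` is pure `n`-dimensional. -/
def Pure (X : SCplx V) (n : ℕ) : Prop :=
  ∀ σ ∈ X.faces, ∃ τ ∈ X.cfaces (n + 1), σ ⊆ τ

/-- a chain/cochain of grade `m`: supported on faces of cardinality `m`. -/
def IsGraded (X : SCplx V) (m : ℕ) (c : Finset V → ZMod 2) : Prop :=
  ∀ σ, c σ ≠ 0 → σ ∈ X.cfaces m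

/-- boundary map (all degrees simultaneously, with the reduced convention `∂₀{v} = ∅`). -/
def bdry (X : SCplx V) (c : Finset V → ZMod 2) : Finset V → ZMod 2 := fun τ =>
  ∑ σ ∈ X.faces.filter (fun σ => τ ⊆ σ ∧ σ.card = τ.card + 1), c σ

/-- coboundary map (all degrees simultaneously). -/
def cobdry (X : SCplx V) (c : Finset V → ZMod 2) : Finset V → ZMod 2 := fun σ =>
  if σ ∈ X.faces then ∑ τ ∈ X.faces.filter (fun τ => τ ⊆ σ ∧ τ.card + 1 = σ.card), c τ else 0

/-- support of a chain/cochain. -/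
def supp (X : SCplx V) (c : Finset V → ZMod 2) : Finset (Finset V) :=
  X.faces.filter fun σ => c σ ≠ 0

/-- the size `|A|` of a chain. -/
def chainCard (X : SCplx V) (c : Finset V → ZMod 2) : ℕ := (X.supp c).card

/-- the chain consisting of a single simplex. -/
def sChain (τ : Finset V) : Finset V → ZMod 2 := fun σ => if σ = τ then 1 else 0

/-- the weight `w(τ)` in a pure `n`-dimensional complex. -/
noncomputable def w (X : SCplx V) (n : ℕ) (τ : Finset V) : ℝ :=
  (((X.cfaces (n + 1)).filter fun σ => τ ⊆ σ).card : ℝ) /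
    (((n + 1).choose τ.card : ℝ) * ((X.cfaces (n + 1)).card : ℝ))

/-- the weight `w(φ)` of a cochain. -/
noncomputable def wC (X : SCplx V) (n : ℕ) (c : Finset V → ZMod 2) : ℝ :=
  ∑ τ ∈ X.supp c, X.w n τ

/-- `φ ∈ B^k(X)`, i.e. `φ` is in the image of `d_{k-1}` on `C^{k-1}(X)`. -/
def IsCoboundary (X : SCplx V) (k : ℕ) (φ : Finset V → ZMod 2) : Prop :=
  ∃ ψ, X.IsGraded k ψ ∧ φ = X.cobdry ψ

/-- evaluation `φ(A)` of a cochain on a chain. -/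
def pair (X : SCplx V) (φ c : Finset V → ZMod 2) : ZMod 2 :=
  ∑ τ ∈ X.faces, φ τ * c τ

/-- A cone function for dimensions `-1,…,K-1` (i.e. a `(K-1)`-cone function)
with apex `v`; chains of dimension `j` are represented in grade (cardinality) `j+1`. -/
structure ConeFun (X : SCplx V) (K : ℕ) (v : V) where
  toFun : (Finset V → ZMod 2) → (Finset V → ZMod 2)
  map_add : ∀ c₁ c₂, toFun (c₁ + c₂) = toFun c₁ + toFun c₂
  graded : ∀ m ≤ K, ∀ c, X.IsGraded m c → X.IsGraded (m + 1) (toFun c)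
  apex : toFun (sChain ∅) = sChain {v}
  cone_eq : ∀ m, 1 ≤ m → m ≤ K → ∀ c, X.IsGraded m c →
    X.bdry (toFun c) = c + toFun (X.bdry c)

/-- the volume of a cone function. -/
def ConeFun.Vol {X : SCplx V} {K : ℕ} {v : V} (C : ConeFun X K v) : ℕ :=
  (X.cfaces K).sup fun τ => X.chainCard (C.toFun (sChain τ))

/-- the cone radius `Crad_{K-1}(X)`. -/
noncomputable def Crad (X : SCplx V) (K : ℕ) : ℕ∞ :=
  ⨅ (v : V) (C : ConeFun X K v), (C.Vol : ℕ∞)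

/-- push-forward of chains along a permutation of the vertices. -/
def pushChain (e : Equiv.Perm V) (c : Finset V → ZMod 2) : Finset V → ZMod 2 :=
  fun σ => c (σ.image e.symm)

/-- the action `ρ(g).f` of a group element on a cone function (on the level of raw maps). -/
def coneAct {G : Type*} [Group G] (ρ : G →* Equiv.Perm V) (g : G)
    (f : (Finset V → ZMod 2) → (Finset V → ZMod 2)) :
    (Finset V → ZMod 2) → (Finset V → ZMod 2) :=
  fun c => pushChain (ρ g) (f (pushChain (ρ g⁻¹) c))

/-- `c ∈ Z_k(X)` : a cycle of dimension `k` (grade `k+1`). -/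
def IsCycle (X : SCplx V) (k : ℕ) (c : Finset V → ZMod 2) : Prop :=
  X.IsGraded (k + 1) c ∧ X.bdry c = 0

/-- `c ∈ B_k(X)` : a boundary of dimension `k` (grade `k+1`). -/
def IsBdryChain (X : SCplx V) (k : ℕ) (c : Finset V → ZMod 2) : Prop :=
  ∃ a, X.IsGraded (k + 2) a ∧ X.bdry a = c

/-- the size of the smallest `k`-systole. -/
noncomputable def Sys (X : SCplx V) (k : ℕ) : ℕ∞ :=
  ⨅ (c : {c : Finset V → ZMod 2 // X.IsCycle k c ∧ ¬X.IsBdryChain k c}),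
    (X.chainCard c.1 : ℕ∞)

/-- `Fill_k(B)` : the size of the smallest filling of the cycle `B`. -/
noncomputable def FillB (X : SCplx V) (k : ℕ) (B : Finset V → ZMod 2) : ℕ∞ :=
  ⨅ (a : {a : Finset V → ZMod 2 // X.IsGraded (k + 2) a ∧ X.bdry a = B}),
    (X.chainCard a.1 : ℕ∞)

/-- `Fill_k(M)` : the filling function. -/
noncomputable def Fill (X : SCplx V) (k : ℕ) (M : ℕ∞) : ℕ∞ :=
  ⨆ (B : {B : Finset V → ZMod 2 // X.IsCycle k B ∧ (X.chainCard B : ℕ∞) ≤ M}),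
    X.FillB k B.1

/-- the constants `M_{k-1}` of Proposition `filling constants prop` (index shifted by one:
`Mconst X (k+1) = M_k`). -/
noncomputable def Mconst (X : SCplx V) : ℕ → ℕ∞
  | 0 => 1
  | (j + 1) => X.Fill j (((j : ℕ∞) + 1) * X.Mconst j + 1)

end SCplx

open scoped ENNReal

namespace SCplx

variable {V : Type} [DecidableEq V]

/-- the weight `w(τ)` in a pure `n`-dimensional complex, valued in `ℝ≥0∞`. -/
noncomputable def wE (X : SCplx V) (n : ℕ) (τ : Finset V) : ℝ≥0∞ :=
  (((X.cfaces (n + 1)).filter fun σ => τ ⊆ σ).card : ℝ≥0∞) /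
    (((n + 1).choose τ.card : ℝ≥0∞) * ((X.cfaces (n + 1)).card : ℝ≥0∞))

/-- the weight `w(φ)` of a cochain, valued in `ℝ≥0∞`. -/
noncomputable def wCE (X : SCplx V) (n : ℕ) (c : Finset V → ZMod 2) : ℝ≥0∞ :=
  ∑ τ ∈ X.supp c, X.wE n τ

end SCplx

/-!
The cochain complex is contracted by cones. Choose a vertex `v` and build, by induction on `#τ`, a
chain `cone v τ` whose boundary is `τ` plus the cones over the facets of `τ`: that sum is a cycle of
size at most `#τ * M + 1`, where `M` bounds the cones over the facets, so it is not systolic and has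
a filling of controlled size. Evaluating cochains on cones gives a homotopy, so a cochain `φ` of
dimension `k` has a coboundary translate that vanishes on `τ` unless `dφ` meets `cone v τ`. The
distance from `φ` to the coboundaries is invariant under `G`, so it may be averaged over the
translates of `φ`: by transitivity on the top faces, a fixed face lies in a random translate of the
support of `dφ` with probability at most the proportion `δ` of top faces containing a face of that
support. Hence the distance is at most `M_k * δ`. Finally `dφ` is a cocycle, so a top face
containing one face of its support contains at least `n - k` of them, which bounds `δ` by
`C(n+1,k+1) / (k+2) * w(dφ)`.
-/

theorem sum_sum_erase_erase {α R : Type*} [DecidableEq α] [Ring R] [CharP R 2]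
    (F : Finset α → R) (s : Finset α) :
    ∑ a ∈ s, ∑ b ∈ s.erase a, F ((s.erase a).erase b) = 0 := by
  rw [sum_sigma']
  refine sum_involution (fun x _ => ⟨x.2, x.1⟩) ?_ ?_ ?_ fun _ _ => rfl
  · rintro ⟨a, b⟩ _
    rw [erase_right_comm]
    exact CharTwo.add_self_eq_zero _
  · rintro ⟨a, b⟩ hab _ heq
    exact (mem_erase.mp (mem_sigma.mp hab).2).1 (Sigma.mk.inj heq).1
  · rintro ⟨a, b⟩ hab
    simp only [mem_sigma, mem_erase] at hab ⊢
    exact ⟨hab.2.2, hab.2.1.symm, hab.1⟩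

theorem card_mul_card_filter_smul_mem {G α : Type*} [Group G] [Fintype G] [MulAction G α]
    [DecidableEq α] {s T : Finset α} (hs : ∀ g : G, ∀ a ∈ s, g • a ∈ s)
    (htrans : ∀ a ∈ s, ∀ b ∈ s, ∃ g : G, g • a = b) (hT : T ⊆ s) {a : α} (ha : a ∈ s) :
    #s * #{g : G | g • a ∈ T} = Fintype.card G * #T := by
  have hleft : ∀ b ∈ s, #{g : G | g • b ∈ T} = #{g : G | g • a ∈ T} := by
    intro b hb
    obtain ⟨h, rfl⟩ := htrans a ha b hb
    exact card_equiv (Equiv.mulRight h) (by simp [mul_smul])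
  have hright : ∀ g : G, #{b ∈ s | g • b ∈ T} = #T := fun g =>
    card_equiv (MulAction.toPerm g) fun b => by
      simp only [mem_filter, MulAction.toPerm_apply, and_iff_right_iff_imp]
      intro hb
      simpa using hs g⁻¹ _ (hT hb)
  calc #s * #{g : G | g • a ∈ T} = ∑ b ∈ s, #{g : G | g • b ∈ T} := by
        rw [sum_congr rfl hleft, sum_const, smul_eq_mul]
    _ = ∑ g : G, #{b ∈ s | g • b ∈ T} :=
        sum_card_bipartiteAbove_eq_sum_card_bipartiteBelow _
    _ = Fintype.card G * #T := by simp [hright]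

namespace SCplx

variable {V : Type} [DecidableEq V] {X : SCplx V} {σ τ η : Finset V} {c φ : Finset V → ZMod 2}
  {m n k : ℕ}

theorem mem_cfaces : σ ∈ X.cfaces m ↔ σ ∈ X.faces ∧ #σ = m := by simp [cfaces]

theorem mem_supp : σ ∈ X.supp c ↔ σ ∈ X.faces ∧ c σ ≠ 0 := by simp [supp]

theorem erase_mem_faces (hσ : σ ∈ X.faces) (a : V) : σ.erase a ∈ X.faces :=
  X.down_closed _ hσ _ (erase_subset a σ)

theorem filter_facets_eq_image_erase (hσ : σ ∈ X.faces) :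
    X.faces.filter (fun τ => τ ⊆ σ ∧ #τ + 1 = #σ) = σ.image σ.erase := by
  ext τ
  have hshadow : (τ ⊆ σ ∧ #σ = #τ + 1) ↔ ∃ a ∈ σ, σ.erase a = τ := by
    simpa using (mem_shadow_iff_exists_mem_card_add_one (𝒜 := {σ})).symm.trans mem_shadow_iff
  rw [mem_filter, mem_image, ← hshadow, eq_comm (a := #σ), and_iff_right_iff_imp]
  exact fun h => X.down_closed _ hσ _ h.1

theorem sum_facets {M : Type*} [AddCommMonoid M] (hσ : σ ∈ X.faces) (F : Finset V → M) :
    ∑ τ ∈ X.faces.filter (fun τ => τ ⊆ σ ∧ #τ + 1 = #σ), F τ = ∑ a ∈ σ, F (σ.erase a) := by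
  rw [filter_facets_eq_image_erase hσ, sum_image (erase_injOn σ)]

section Graded

theorem IsGraded.add {d : Finset V → ZMod 2} (hc : X.IsGraded m c) (hd : X.IsGraded m d) :
    X.IsGraded m (c + d) := by
  intro σ hσ
  by_cases h : c σ = 0
  · exact hd σ (by simpa [h] using hσ)
  · exact hc σ h

theorem IsGraded.sum {ι : Type*} {s : Finset ι} {c : ι → Finset V → ZMod 2}
    (hc : ∀ i ∈ s, X.IsGraded m (c i)) : X.IsGraded m (∑ i ∈ s, c i) := by
  intro σ hσ
  rw [Finset.sum_apply] at hσ
  obtain ⟨i, hi, hσi⟩ := exists_ne_zero_of_sum_ne_zero hσ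
  exact hc i hi σ hσi

theorem isGraded_sChain (hσ : σ ∈ X.faces) : X.IsGraded #σ (sChain σ) := by
  intro τ hτ
  obtain rfl : τ = σ := by simpa [sChain] using hτ
  exact mem_cfaces.mpr ⟨hσ, rfl⟩

end Graded

section Coboundary

theorem cobdry_apply (hσ : σ ∈ X.faces) (c : Finset V → ZMod 2) :
    X.cobdry c σ = ∑ a ∈ σ, c (σ.erase a) := by
  rw [cobdry, if_pos hσ, sum_facets hσ]

theorem cobdry_of_notMem (hσ : σ ∉ X.faces) (c : Finset V → ZMod 2) : X.cobdry c σ = 0 :=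
  if_neg hσ

theorem cobdry_cobdry (X : SCplx V) (c : Finset V → ZMod 2) : X.cobdry (X.cobdry c) = 0 := by
  ext1 σ
  by_cases hσ : σ ∈ X.faces
  · rw [cobdry_apply hσ, sum_congr rfl fun a _ => cobdry_apply (erase_mem_faces hσ a) c]
    exact sum_sum_erase_erase c σ
  · exact cobdry_of_notMem hσ _

theorem IsGraded.cobdry (hc : X.IsGraded m c) : X.IsGraded (m + 1) (X.cobdry c) := by
  intro σ hσ
  have hface : σ ∈ X.faces := by
    by_contra h
    exact hσ (cobdry_of_notMem h c)
  rw [cobdry_apply hface] at hσ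
  obtain ⟨a, ha, hca⟩ := exists_ne_zero_of_sum_ne_zero hσ
  rw [mem_cfaces, ← (mem_cfaces.mp (hc _ hca)).2, card_erase_add_one ha]
  exact ⟨hface, rfl⟩

theorem IsCoboundary.isGraded (hφ : X.IsCoboundary k φ) : X.IsGraded (k + 1) φ := by
  obtain ⟨ψ, hψ, rfl⟩ := hφ
  exact hψ.cobdry

/-- The coboundary of `ζ` at `insert u η` vanishes, so `η` cannot be the only face of the support
of `ζ` in `insert u η`. -/
theorem exists_mem_of_cobdry_eq_zero {ζ : Finset V → ZMod 2} (hζ : X.cobdry ζ = 0) {u : V}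
    (hface : insert u η ∈ X.faces) (hu : u ∉ η) (hη : ζ η ≠ 0) :
    ∃ τ ⊆ insert u η, u ∈ τ ∧ ζ τ ≠ 0 := by
  have hsum : ζ η + ∑ a ∈ η, ζ ((insert u η).erase a) = 0 := by
    simpa [cobdry_apply hface, sum_insert hu, erase_insert hu] using congrFun hζ (insert u η)
  have hsum_ne : ∑ a ∈ η, ζ ((insert u η).erase a) ≠ 0 := fun h =>
    hη (by rwa [h, add_zero] at hsum)
  obtain ⟨a, ha, hne⟩ := exists_ne_zero_of_sum_ne_zero hsum_ne
  refine ⟨_, erase_subset _ _, mem_erase.mpr ⟨?_, mem_insert_self u η⟩, hne⟩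
  rintro rfl
  exact hu ha

theorem card_sdiff_lt_card_supp_subset {ζ : Finset V → ZMod 2} (hζ : X.cobdry ζ = 0)
    (hσ : σ ∈ X.faces) (hησ : η ⊆ σ) (hη : ζ η ≠ 0) :
    #(σ \ η) < #{τ ∈ X.supp ζ | τ ⊆ σ} := by
  have hmem : ∀ τ ⊆ σ, ζ τ ≠ 0 → τ ∈ {τ ∈ X.supp ζ | τ ⊆ σ} := fun τ hτ h =>
    mem_filter.mpr ⟨mem_supp.mpr ⟨X.down_closed σ hσ τ hτ, h⟩, hτ⟩
  have hexists : ∀ u ∈ σ \ η, ∃ τ ⊆ insert u η, u ∈ τ ∧ ζ τ ≠ 0 := fun u hu =>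
    exists_mem_of_cobdry_eq_zero hζ
      (X.down_closed σ hσ _ (insert_subset (mem_sdiff.mp hu).1 hησ)) (mem_sdiff.mp hu).2 hη
  choose! t ht_sub ht_mem ht_ne using hexists
  have hmaps : ∀ u ∈ σ \ η, t u ∈ {τ ∈ X.supp ζ | τ ⊆ σ}.erase η := fun u hu =>
    mem_erase.mpr ⟨fun h => (mem_sdiff.mp hu).2 (h ▸ ht_mem u hu),
      hmem _ ((ht_sub u hu).trans (insert_subset (mem_sdiff.mp hu).1 hησ)) (ht_ne u hu)⟩
  have hinj : Set.InjOn t (σ \ η : Finset V) := fun u hu u' hu' h =>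
    (mem_insert.mp (ht_sub u' hu' (h ▸ ht_mem u hu))).resolve_right (mem_sdiff.mp hu).2
  exact (card_le_card_of_injOn t hmaps hinj).trans_lt (card_erase_lt_of_mem (hmem η hησ hη))

end Coboundary

section Boundary

theorem bdry_add (X : SCplx V) (c d : Finset V → ZMod 2) :
    X.bdry (c + d) = X.bdry c + X.bdry d := by
  ext1 τ
  exact sum_add_distrib

theorem bdry_sum {ι : Type*} (X : SCplx V) (s : Finset ι) (c : ι → Finset V → ZMod 2) :
    X.bdry (∑ i ∈ s, c i) = ∑ i ∈ s, X.bdry (c i) := by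
  ext1 τ
  simp only [bdry, Finset.sum_apply]
  exact sum_comm

theorem bdry_sChain (hσ : σ ∈ X.faces) :
    X.bdry (sChain σ) = ∑ a ∈ σ, sChain (σ.erase a) := by
  ext1 τ
  rw [Finset.sum_apply, ← sum_facets hσ (fun ρ => sChain ρ τ)]
  simp only [bdry, sChain, sum_ite_eq, sum_ite_eq', mem_filter]
  refine if_congr ⟨?_, ?_⟩ rfl rfl
  · rintro ⟨-, hsub, hcard⟩
    exact ⟨X.down_closed _ hσ _ hsub, hsub, hcard.symm⟩
  · rintro ⟨-, hsub, hcard⟩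
    exact ⟨hσ, hsub, hcard.symm⟩

end Boundary

section ChainCard

theorem chainCard_add_le (X : SCplx V) (c d : Finset V → ZMod 2) :
    X.chainCard (c + d) ≤ X.chainCard c + X.chainCard d := by
  refine (card_le_card fun σ hσ => ?_).trans (card_union_le _ _)
  simp only [mem_union, mem_supp, Pi.add_apply] at hσ ⊢
  by_cases h : c σ = 0
  · exact Or.inr ⟨hσ.1, by simpa [h] using hσ.2⟩
  · exact Or.inl ⟨hσ.1, h⟩

theorem chainCard_sum_le {ι : Type*} (X : SCplx V) (s : Finset ι) (c : ι → Finset V → ZMod 2) :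
    X.chainCard (∑ i ∈ s, c i) ≤ ∑ i ∈ s, X.chainCard (c i) :=
  le_sum_of_subadditive _ (by simp [chainCard, supp]) X.chainCard_add_le s c

theorem chainCard_sChain_le_one (X : SCplx V) (σ : Finset V) : X.chainCard (sChain σ) ≤ 1 := by
  rw [chainCard, ← card_singleton σ]
  refine card_le_card fun τ hτ => ?_
  simpa [sChain] using (mem_supp.mp hτ).2

end ChainCard

section Pairing

theorem pair_add (X : SCplx V) (φ c d : Finset V → ZMod 2) :
    X.pair φ (c + d) = X.pair φ c + X.pair φ d := by
  simp [pair, mul_add, sum_add_distrib]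

theorem pair_sum {ι : Type*} (X : SCplx V) (φ : Finset V → ZMod 2) (s : Finset ι)
    (c : ι → Finset V → ZMod 2) : X.pair φ (∑ i ∈ s, c i) = ∑ i ∈ s, X.pair φ (c i) := by
  simp only [pair, Finset.sum_apply, mul_sum]
  exact sum_comm

theorem pair_sChain (φ : Finset V → ZMod 2) (hσ : σ ∈ X.faces) : X.pair φ (sChain σ) = φ σ := by
  simp [pair, sChain, hσ]

theorem pair_cobdry (X : SCplx V) (φ c : Finset V → ZMod 2) :
    X.pair (X.cobdry φ) c = X.pair φ (X.bdry c) := by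
  simp only [pair, bdry, mul_sum, sum_filter]
  rw [sum_comm]
  refine sum_congr rfl fun σ hσ => ?_
  rw [cobdry, if_pos hσ, sum_mul, sum_filter]
  refine sum_congr rfl fun τ _ => ?_
  simp only [eq_comm (a := #σ), mul_ite, mul_zero]

theorem exists_mem_supp_of_pair_ne_zero (h : X.pair φ c ≠ 0) : ∃ η ∈ X.supp c, φ η ≠ 0 := by
  obtain ⟨η, hη, hne⟩ := exists_ne_zero_of_sum_ne_zero h
  exact ⟨η, mem_supp.mpr ⟨hη, right_ne_zero_of_mul hne⟩, left_ne_zero_of_mul hne⟩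

end Pairing

section Filling

variable {B : Finset V → ZMod 2}

theorem IsCycle.isBdryChain_of_lt_Sys (hB : X.IsCycle k B) (hlt : (X.chainCard B : ℕ∞) < X.Sys k) :
    X.IsBdryChain k B := by
  by_contra h
  exact hlt.not_ge (iInf_le (fun c : {c // X.IsCycle k c ∧ ¬X.IsBdryChain k c} =>
    (X.chainCard c.1 : ℕ∞)) ⟨B, hB, h⟩)

theorem IsCycle.FillB_le_Fill {M : ℕ∞} (hB : X.IsCycle k B) (hM : (X.chainCard B : ℕ∞) ≤ M) :
    X.FillB k B ≤ X.Fill k M :=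
  le_iSup (fun B : {B // X.IsCycle k B ∧ (X.chainCard B : ℕ∞) ≤ M} => X.FillB k B.1) ⟨B, hB, hM⟩

/-- A filling of the `k`-dimensional chain `B` of the smallest possible size; it is meaningful only
when `B` is a boundary. -/
noncomputable def minimalFilling (X : SCplx V) (k : ℕ) (B : Finset V → ZMod 2) :
    Finset V → ZMod 2 :=
  Classical.epsilon fun a =>
    (X.IsGraded (k + 2) a ∧ X.bdry a = B) ∧ (X.chainCard a : ℕ∞) = X.FillB k B

theorem IsBdryChain.minimalFilling_spec (hB : X.IsBdryChain k B) :
    (X.IsGraded (k + 2) (X.minimalFilling k B) ∧ X.bdry (X.minimalFilling k B) = B) ∧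
      (X.chainCard (X.minimalFilling k B) : ℕ∞) = X.FillB k B := by
  have : Nonempty {a // X.IsGraded (k + 2) a ∧ X.bdry a = B} := nonempty_subtype.mpr hB
  obtain ⟨a, ha⟩ := ENat.exists_eq_iInf
    fun a : {a // X.IsGraded (k + 2) a ∧ X.bdry a = B} => (X.chainCard a.1 : ℕ∞)
  exact Classical.epsilon_spec (p := fun a => (X.IsGraded (k + 2) a ∧ X.bdry a = B) ∧
    (X.chainCard a : ℕ∞) = X.FillB k B) ⟨a.1, a.2, ha⟩

end Filling

section Cone

variable {f : Finset V → Finset V → ZMod 2} {v : V}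

/-- The chain which a cone over `τ` has to fill: the face `τ` together with the cones `f` over its
facets. -/
def coneBase (f : Finset V → Finset V → ZMod 2) (τ : Finset V) : Finset V → ZMod 2 :=
  sChain τ + ∑ a ∈ τ, f (τ.erase a)

/-- `f τ` is a cone over `τ`, relative to the cones given by `f` over the facets of `τ`. A family
`f` with this property at all faces of dimension at most `k` amounts to a `k`-cone function given by
its values on single faces. -/
structure IsConeAt (X : SCplx V) (f : Finset V → Finset V → ZMod 2) (τ : Finset V) : Prop where
  isGraded : X.IsGraded (#τ + 1) (f τ)
  bdry_eq : X.bdry (f τ) = coneBase f τ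

theorem isCycle_coneBase (hτ : τ ∈ X.cfaces (m + 1))
    (hf : ∀ a ∈ τ, X.IsConeAt f (τ.erase a)) : X.IsCycle m (coneBase f τ) := by
  obtain ⟨hface, hcard⟩ := mem_cfaces.mp hτ
  constructor
  · rw [← hcard]
    refine (isGraded_sChain hface).add (IsGraded.sum fun a ha => ?_)
    simpa only [card_erase_add_one ha] using (hf a ha).isGraded
  · rw [coneBase, bdry_add, bdry_sum, bdry_sChain hface,
      sum_congr rfl fun a ha => (hf a ha).bdry_eq]
    simp only [coneBase]
    rw [sum_add_distrib, sum_sum_erase_erase, add_zero, CharTwo.add_self_eq_zero]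

theorem chainCard_coneBase_le {M : ℕ∞}
    (hf : ∀ a ∈ τ, (X.chainCard (f (τ.erase a)) : ℕ∞) ≤ M) :
    (X.chainCard (coneBase f τ) : ℕ∞) ≤ #τ * M + 1 := by
  have hle : X.chainCard (coneBase f τ) ≤ ∑ a ∈ τ, X.chainCard (f (τ.erase a)) + 1 := by
    rw [add_comm]
    exact (X.chainCard_add_le _ _).trans
      (add_le_add (X.chainCard_sChain_le_one τ) (X.chainCard_sum_le _ _))
  calc (X.chainCard (coneBase f τ) : ℕ∞)
      ≤ ∑ a ∈ τ, (X.chainCard (f (τ.erase a)) : ℕ∞) + 1 := by exact_mod_cast hle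
    _ ≤ #τ * M + 1 := by
        gcongr
        simpa only [nsmul_eq_mul] using sum_le_card_nsmul τ _ M hf

/-- The cones with apex `v`, obtained by filling greedily in order of increasing dimension. The
empty face, of dimension `-1`, is coned off by `v` itself. -/
noncomputable def cone (X : SCplx V) (v : V) (τ : Finset V) : Finset V → ZMod 2 :=
  if τ = ∅ then sChain {v}
  else X.minimalFilling (#τ - 1) (sChain τ + ∑ a ∈ τ.attach, X.cone v (τ.erase a))
termination_by #τ
decreasing_by exact card_erase_lt_of_mem a.2

theorem cone_empty (X : SCplx V) (v : V) : X.cone v ∅ = sChain {v} := by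
  rw [cone, if_pos rfl]

theorem cone_of_card_eq_succ (X : SCplx V) (v : V) (hτ : #τ = m + 1) :
    X.cone v τ = X.minimalFilling m (coneBase (X.cone v) τ) := by
  have hne : τ ≠ ∅ := card_ne_zero.mp (by omega) |>.ne_empty
  rw [cone, if_neg hne, hτ, sum_attach τ fun a => X.cone v (τ.erase a)]
  rfl

theorem isConeAt_cone_empty (hv : {v} ∈ X.faces) : X.IsConeAt (X.cone v) ∅ where
  isGraded := by
    rw [cone_empty]
    exact isGraded_sChain hv
  bdry_eq := by
    rw [cone_empty, bdry_sChain hv]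
    simp [coneBase]

theorem isConeAt_cone (hv : {v} ∈ X.faces)
    (hSys : ∀ j < m, ((j : ℕ∞) + 1) * X.Mconst j + 1 < X.Sys j) (hτ : τ ∈ X.cfaces m) :
    X.IsConeAt (X.cone v) τ ∧ (X.chainCard (X.cone v τ) : ℕ∞) ≤ X.Mconst m := by
  induction m generalizing τ with
  | zero =>
    obtain rfl : τ = ∅ := card_eq_zero.mp (mem_cfaces.mp hτ).2
    refine ⟨isConeAt_cone_empty hv, ?_⟩
    rw [cone_empty, Mconst]
    exact_mod_cast X.chainCard_sChain_le_one {v}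
  | succ m ih =>
    obtain ⟨hface, hcard⟩ := mem_cfaces.mp hτ
    have hfacets : ∀ a ∈ τ, X.IsConeAt (X.cone v) (τ.erase a) ∧
        (X.chainCard (X.cone v (τ.erase a)) : ℕ∞) ≤ X.Mconst m := fun a ha =>
      ih (fun j hj => hSys j (by omega)) <| mem_cfaces.mpr
        ⟨erase_mem_faces hface a, by rw [card_erase_of_mem ha, hcard, Nat.add_sub_cancel]⟩
    have hcycle : X.IsCycle m (coneBase (X.cone v) τ) :=
      isCycle_coneBase hτ fun a ha => (hfacets a ha).1
    have hsize : (X.chainCard (coneBase (X.cone v) τ) : ℕ∞) ≤ ((m : ℕ∞) + 1) * X.Mconst m + 1 := by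
      simpa [hcard] using chainCard_coneBase_le fun a ha => (hfacets a ha).2
    obtain ⟨⟨hgraded, hbdry⟩, hfill⟩ :=
      (hcycle.isBdryChain_of_lt_Sys (hsize.trans_lt (hSys m m.lt_succ_self))).minimalFilling_spec
    rw [← cone_of_card_eq_succ X v hcard] at hgraded hbdry hfill
    exact ⟨⟨by rwa [hcard], hbdry⟩, hfill.trans_le (hcycle.FillB_le_Fill hsize)⟩

/-- The contraction of `φ` by a family of cones `f`: the cochain of dimension `k - 1` which takes on
`ρ` the value of `φ` on the cone over `ρ`. -/
def contract (X : SCplx V) (f : Finset V → Finset V → ZMod 2) (k : ℕ) (φ : Finset V → ZMod 2) :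
    Finset V → ZMod 2 :=
  fun ρ => if ρ ∈ X.cfaces k then X.pair φ (f ρ) else 0

theorem isGraded_contract (X : SCplx V) (f : Finset V → Finset V → ZMod 2) (k : ℕ)
    (φ : Finset V → ZMod 2) : X.IsGraded k (X.contract f k φ) := by
  intro ρ hρ
  by_contra h
  exact hρ (if_neg h)

theorem add_cobdry_contract_apply (φ : Finset V → ZMod 2) (hτ : τ ∈ X.cfaces (k + 1))
    (hf : X.bdry (f τ) = coneBase f τ) :
    (φ + X.cobdry (X.contract f k φ)) τ = X.pair (X.cobdry φ) (f τ) := by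
  obtain ⟨hface, hcard⟩ := mem_cfaces.mp hτ
  rw [pair_cobdry, hf, coneBase, pair_add, pair_sum, pair_sChain φ hface, Pi.add_apply,
    cobdry_apply hface]
  congr 1
  refine sum_congr rfl fun a ha => if_pos (mem_cfaces.mpr ⟨erase_mem_faces hface a, ?_⟩)
  rw [card_erase_of_mem ha, hcard, Nat.add_sub_cancel]

end Cone

section Weight

theorem sum_card_cofaces (X : SCplx V) (n m : ℕ) :
    ∑ τ ∈ X.cfaces m, #{σ ∈ X.cfaces (n + 1) | τ ⊆ σ} =
      #(X.cfaces (n + 1)) * (n + 1).choose m := by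
  have hsubfaces : ∀ σ ∈ X.cfaces (n + 1), #{τ ∈ X.cfaces m | τ ⊆ σ} = (n + 1).choose m := by
    intro σ hσ
    obtain ⟨hface, hcard⟩ := mem_cfaces.mp hσ
    rw [← hcard, ← card_powersetCard]
    congr 1
    ext τ
    simp only [mem_filter, mem_cfaces, mem_powersetCard]
    exact ⟨fun h => ⟨h.2, h.1.2⟩, fun h => ⟨⟨X.down_closed _ hface _ h.1, h.2⟩, h.1⟩⟩
  calc ∑ τ ∈ X.cfaces m, #{σ ∈ X.cfaces (n + 1) | τ ⊆ σ}
      = ∑ σ ∈ X.cfaces (n + 1), #{τ ∈ X.cfaces m | τ ⊆ σ} :=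
        sum_card_bipartiteAbove_eq_sum_card_bipartiteBelow _
    _ = #(X.cfaces (n + 1)) * (n + 1).choose m := by
        rw [sum_congr rfl hsubfaces, sum_const, smul_eq_mul]

theorem sum_wE_eq_div {s : Finset (Finset V)} (n : ℕ) (hs : ∀ τ ∈ s, #τ = m) :
    ∑ τ ∈ s, X.wE n τ = ((∑ τ ∈ s, #{σ ∈ X.cfaces (n + 1) | τ ⊆ σ} : ℕ) : ℝ≥0∞) /
      ((n + 1).choose m * #(X.cfaces (n + 1))) := by
  rw [Nat.cast_sum, div_eq_mul_inv, sum_mul]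
  refine sum_congr rfl fun τ hτ => ?_
  rw [wE, hs τ hτ, div_eq_mul_inv]

theorem sum_wE_cfaces_le_one (X : SCplx V) (n m : ℕ) : ∑ τ ∈ X.cfaces m, X.wE n τ ≤ 1 := by
  rw [sum_wE_eq_div n fun τ hτ => (mem_cfaces.mp hτ).2, sum_card_cofaces, Nat.cast_mul,
    mul_comm]
  exact ENNReal.div_self_le_one

/-- The top faces containing a face of the support of `c`. -/
def topStar (X : SCplx V) (n : ℕ) (c : Finset V → ZMod 2) : Finset (Finset V) :=
  {σ ∈ X.cfaces (n + 1) | ∃ η ⊆ σ, c η ≠ 0}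

/-- The proportion of top faces which contain a face of the support of `c`. -/
noncomputable def topStarDensity (X : SCplx V) (n : ℕ) (c : Finset V → ZMod 2) : ℝ≥0∞ :=
  #(X.topStar n c) / #(X.cfaces (n + 1))

theorem card_topStar_mul_le_of_cobdry_eq_zero {ζ : Finset V → ZMod 2}
    (hgraded : X.IsGraded (m + 1) ζ) (hζ : X.cobdry ζ = 0) :
    #(X.topStar n ζ) * (n + 1 - m) ≤ ∑ τ ∈ X.supp ζ, #{σ ∈ X.cfaces (n + 1) | τ ⊆ σ} := by
  have hmany : ∀ σ ∈ X.topStar n ζ, n + 1 - m ≤ #{τ ∈ X.supp ζ | τ ⊆ σ} := by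
    intro σ hσ
    obtain ⟨hσtop, η, hησ, hη⟩ := mem_filter.mp hσ
    obtain ⟨hface, hcard⟩ := mem_cfaces.mp hσtop
    have hlt := card_sdiff_lt_card_supp_subset hζ hface hησ hη
    rw [card_sdiff_of_subset hησ, hcard, (mem_cfaces.mp (hgraded η hη)).2] at hlt
    omega
  calc #(X.topStar n ζ) * (n + 1 - m)
      ≤ ∑ σ ∈ X.topStar n ζ, #{τ ∈ X.supp ζ | τ ⊆ σ} := card_nsmul_le_sum _ _ _ hmany
    _ ≤ ∑ σ ∈ X.cfaces (n + 1), #{τ ∈ X.supp ζ | τ ⊆ σ} :=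
        sum_le_sum_of_subset (filter_subset _ _)
    _ = ∑ τ ∈ X.supp ζ, #{σ ∈ X.cfaces (n + 1) | τ ⊆ σ} :=
        (sum_card_bipartiteAbove_eq_sum_card_bipartiteBelow _).symm

theorem topStarDensity_le_of_cobdry_eq_zero {ζ : Finset V → ZMod 2} (hm : m ≤ n)
    (hgraded : X.IsGraded (m + 1) ζ) (hζ : X.cobdry ζ = 0) :
    (m + 1) * X.topStarDensity n ζ ≤ (n + 1).choose m * X.wCE n ζ := by
  have hchoose : (n + 1).choose (m + 1) ≠ 0 := Nat.choose_ne_zero (by omega)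
  have hcount : (n + 1).choose (m + 1) * ((m + 1) * #(X.topStar n ζ)) ≤
      (n + 1).choose m * ∑ τ ∈ X.supp ζ, #{σ ∈ X.cfaces (n + 1) | τ ⊆ σ} := by
    rw [← mul_assoc, Nat.choose_succ_right_eq, mul_assoc, mul_comm (n + 1 - m)]
    exact Nat.mul_le_mul_left _ (card_topStar_mul_le_of_cobdry_eq_zero hgraded hζ)
  rw [topStarDensity, wCE,
    sum_wE_eq_div n fun τ hτ => (mem_cfaces.mp (hgraded τ (mem_supp.mp hτ).2)).2, ← mul_div_assoc,
    ← mul_div_assoc, ← ENNReal.mul_div_mul_left _ _ (Nat.cast_ne_zero.mpr hchoose)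
      (ENNReal.natCast_ne_top _)]
  exact ENNReal.div_le_div_right (by exact_mod_cast hcount) _

/-- The distance from `φ` to the `k`-coboundaries with respect to the weight `w`. -/
noncomputable def coboundaryDist (X : SCplx V) (n k : ℕ) (φ : Finset V → ZMod 2) : ℝ≥0∞ :=
  sInf {r : ℝ≥0∞ | ∃ ψ, X.IsCoboundary k ψ ∧ r = X.wCE n (φ + ψ)}

theorem coboundaryDist_le {ψ : Finset V → ZMod 2} (hψ : X.IsCoboundary k ψ) :
    X.coboundaryDist n k φ ≤ X.wCE n (φ + ψ) :=
  sInf_le ⟨ψ, hψ, rfl⟩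

theorem coboundaryDist_le_sum_cone {f : Finset V → Finset V → ZMod 2}
    (hf : ∀ τ ∈ X.cfaces (k + 1), X.bdry (f τ) = coneBase f τ) (hφ : X.IsGraded (k + 1) φ) :
    X.coboundaryDist n k φ ≤
      ∑ τ ∈ X.cfaces (k + 1), X.wE n τ * #{η ∈ X.supp (f τ) | X.cobdry φ η ≠ 0} := by
  have hcob : X.IsCoboundary k (X.cobdry (X.contract f k φ)) := ⟨_, X.isGraded_contract f k φ, rfl⟩
  have hsupp : X.supp (φ + X.cobdry (X.contract f k φ)) ⊆ X.cfaces (k + 1) := fun τ hτ =>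
    hφ.add hcob.isGraded τ (mem_supp.mp hτ).2
  refine (coboundaryDist_le hcob).trans ((sum_le_sum fun τ hτ => ?_).trans
    (sum_le_sum_of_subset hsupp))
  have hne := (mem_supp.mp hτ).2
  rw [add_cobdry_contract_apply φ (hsupp hτ) (hf τ (hsupp hτ))] at hne
  obtain ⟨η, hη, hdη⟩ := exists_mem_supp_of_pair_ne_zero hne
  have hpos : 1 ≤ #{η ∈ X.supp (f τ) | X.cobdry φ η ≠ 0} :=
    card_pos.mpr ⟨η, mem_filter.mpr ⟨hη, hdη⟩⟩
  exact le_mul_of_one_le_right' (by exact_mod_cast hpos)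

end Weight

section Automorphism

variable {e : Equiv.Perm V}

/-- `e` is a simplicial automorphism of `X`. -/
def IsAut (X : SCplx V) (e : Equiv.Perm V) : Prop :=
  ∀ σ, σ.image e ∈ X.faces ↔ σ ∈ X.faces

theorem image_image_symm (e : Equiv.Perm V) (σ : Finset V) : (σ.image e.symm).image e = σ := by
  simp [image_image]

theorem pushChain_pushChain_symm (e : Equiv.Perm V) (c : Finset V → ZMod 2) :
    pushChain e (pushChain e.symm c) = c := by
  ext1 σ
  exact congrArg c (image_image_symm e σ)

theorem IsAut.symm (he : X.IsAut e) : X.IsAut e.symm := fun σ => by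
  rw [← he, image_image_symm]

theorem IsAut.image_mem_cfaces (he : X.IsAut e) : σ.image e ∈ X.cfaces m ↔ σ ∈ X.cfaces m := by
  rw [mem_cfaces, mem_cfaces, he, card_image_of_injective _ e.injective]

theorem IsAut.wE_image (he : X.IsAut e) (n : ℕ) (τ : Finset V) :
    X.wE n (τ.image e) = X.wE n τ := by
  have hcofaces : #{σ ∈ X.cfaces (n + 1) | τ ⊆ σ} =
      #{σ ∈ X.cfaces (n + 1) | τ.image e ⊆ σ} :=
    card_equiv e.finsetCongr fun σ => by
      simp [map_eq_image, he.image_mem_cfaces, image_subset_image_iff e.injective]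
  rw [wE, wE, hcofaces, card_image_of_injective _ e.injective]

theorem IsAut.wCE_pushChain (he : X.IsAut e) (n : ℕ) (c : Finset V → ZMod 2) :
    X.wCE n (pushChain e c) = X.wCE n c :=
  sum_equiv e.symm.finsetCongr
    (fun σ => by simp [mem_supp, map_eq_image, he.symm σ, pushChain])
    (fun _ _ => by simp [map_eq_image, he.symm.wE_image])

theorem IsAut.isGraded_pushChain (he : X.IsAut e) (hc : X.IsGraded m c) :
    X.IsGraded m (pushChain e c) := fun _ hσ =>
  he.symm.image_mem_cfaces.mp (hc _ hσ)

theorem IsAut.cobdry_pushChain (he : X.IsAut e) (c : Finset V → ZMod 2) :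
    X.cobdry (pushChain e c) = pushChain e (X.cobdry c) := by
  ext1 σ
  by_cases hσ : σ ∈ X.faces
  · rw [pushChain, cobdry_apply hσ, cobdry_apply ((he.symm σ).mpr hσ),
      sum_image e.symm.injective.injOn]
    simp only [pushChain, image_erase e.symm.injective]
  · rw [pushChain, cobdry_of_notMem hσ, cobdry_of_notMem (mt (he.symm σ).mp hσ)]

theorem IsAut.isCoboundary_pushChain (he : X.IsAut e) (hφ : X.IsCoboundary k φ) :
    X.IsCoboundary k (pushChain e φ) := by
  obtain ⟨ψ, hψ, rfl⟩ := hφ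
  exact ⟨pushChain e ψ, he.isGraded_pushChain hψ, (he.cobdry_pushChain ψ).symm⟩

theorem IsAut.coboundaryDist_le_pushChain (he : X.IsAut e) (n k : ℕ) (φ : Finset V → ZMod 2) :
    X.coboundaryDist n k φ ≤ X.coboundaryDist n k (pushChain e φ) := by
  refine le_sInf ?_
  rintro _ ⟨ψ, hψ, rfl⟩
  have hpush : pushChain e (φ + pushChain e.symm ψ) = pushChain e φ + ψ := by
    conv_rhs => rw [← pushChain_pushChain_symm e ψ]
    rfl
  rw [← hpush, he.wCE_pushChain]
  exact coboundaryDist_le (he.symm.isCoboundary_pushChain hψ)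

end Automorphism

section Transitive

variable {G : Type*} [Group G] {ρ : G →* Equiv.Perm V}

theorem isAut_of_forall_image_mem (hface : ∀ g : G, ∀ σ ∈ X.faces, σ.image (ρ g) ∈ X.faces)
    (g : G) : X.IsAut (ρ g) := by
  refine fun σ => ⟨fun h => ?_, hface g σ⟩
  simpa [image_image] using hface g⁻¹ _ h

open scoped Pointwise in
theorem card_filter_image_ne_zero_le [Fintype G] (hpure : X.Pure n)
    (hface : ∀ g : G, ∀ σ ∈ X.faces, σ.image (ρ g) ∈ X.faces)
    (htrans : ∀ σ ∈ X.cfaces (n + 1), ∀ τ ∈ X.cfaces (n + 1), ∃ g : G, σ.image (ρ g) = τ)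
    (ζ : Finset V → ZMod 2) (hη : η ∈ X.faces) :
    (#{g : G | ζ (η.image (ρ g)) ≠ 0} : ℝ≥0∞) ≤ Fintype.card G * X.topStarDensity n ζ := by
  obtain ⟨σ, hσ, hησ⟩ := hpure η hη
  have hmem : ∀ g : G, ∀ σ ∈ X.cfaces (n + 1), σ.image (ρ g) ∈ X.cfaces (n + 1) := fun g _ =>
    (isAut_of_forall_image_mem hface g).image_mem_cfaces.mpr
  have hsub : #{g : G | ζ (η.image (ρ g)) ≠ 0} ≤ #{g : G | σ.image (ρ g) ∈ X.topStar n ζ} := by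
    refine card_le_card (monotone_filter_right _ fun g _ hg => ?_)
    exact mem_filter.mpr ⟨hmem g σ hσ, _, image_subset_image hησ, hg⟩
  let _ : MulAction G (Finset V) := MulAction.compHom (Finset V) ρ
  have hcount : #(X.cfaces (n + 1)) * #{g : G | σ.image (ρ g) ∈ X.topStar n ζ} =
      Fintype.card G * #(X.topStar n ζ) :=
    card_mul_card_filter_smul_mem hmem htrans (filter_subset _ _) hσ
  have hcard : #(X.cfaces (n + 1)) ≠ 0 := card_ne_zero_of_mem hσ
  rw [topStarDensity, ← mul_div_assoc, ENNReal.le_div_iff_mul_le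
    (Or.inl (Nat.cast_ne_zero.mpr hcard)) (Or.inl (ENNReal.natCast_ne_top _))]
  exact_mod_cast (Nat.mul_le_mul_right _ hsub).trans_eq ((mul_comm _ _).trans hcount)

theorem sum_card_supp_filter_image_ne_zero_le [Fintype G] (hpure : X.Pure n)
    (hface : ∀ g : G, ∀ σ ∈ X.faces, σ.image (ρ g) ∈ X.faces)
    (htrans : ∀ σ ∈ X.cfaces (n + 1), ∀ τ ∈ X.cfaces (n + 1), ∃ g : G, σ.image (ρ g) = τ)
    (ζ c : Finset V → ZMod 2) :
    ∑ g : G, (#{η ∈ X.supp c | ζ (η.image (ρ g)) ≠ 0} : ℝ≥0∞) ≤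
      X.chainCard c * (Fintype.card G * X.topStarDensity n ζ) := by
  calc ∑ g : G, (#{η ∈ X.supp c | ζ (η.image (ρ g)) ≠ 0} : ℝ≥0∞)
      = ∑ η ∈ X.supp c, (#{g : G | ζ (η.image (ρ g)) ≠ 0} : ℝ≥0∞) := by
        exact_mod_cast (sum_card_bipartiteAbove_eq_sum_card_bipartiteBelow
          fun (η : Finset V) (g : G) => ζ (η.image (ρ g)) ≠ 0).symm
    _ ≤ X.chainCard c * (Fintype.card G * X.topStarDensity n ζ) := by
        rw [chainCard, ← nsmul_eq_mul]
        exact sum_le_card_nsmul _ _ _ fun η hη =>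
          card_filter_image_ne_zero_le hpure hface htrans ζ (mem_supp.mp hη).1

theorem coboundaryDist_le_mul_topStarDensity [Finite G] (hpure : X.Pure n)
    (hface : ∀ g : G, ∀ σ ∈ X.faces, σ.image (ρ g) ∈ X.faces)
    (htrans : ∀ σ ∈ X.cfaces (n + 1), ∀ τ ∈ X.cfaces (n + 1), ∃ g : G, σ.image (ρ g) = τ)
    {f : Finset V → Finset V → ZMod 2}
    (hf : ∀ τ ∈ X.cfaces (k + 1), X.bdry (f τ) = coneBase f τ) {M : ℝ≥0∞}
    (hM : ∀ τ ∈ X.cfaces (k + 1), (X.chainCard (f τ) : ℝ≥0∞) ≤ M) (hφ : X.IsGraded (k + 1) φ) :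
    X.coboundaryDist n k φ ≤ M * X.topStarDensity n (X.cobdry φ) := by
  have := Fintype.ofFinite G
  have haut : ∀ g : G, X.IsAut (ρ g).symm := fun g => (isAut_of_forall_image_mem hface g).symm
  have hdist : ∀ g : G, X.coboundaryDist n k φ ≤ ∑ τ ∈ X.cfaces (k + 1),
      X.wE n τ * #{η ∈ X.supp (f τ) | X.cobdry φ (η.image (ρ g)) ≠ 0} := by
    intro g
    refine ((haut g).coboundaryDist_le_pushChain n k φ).trans
      ((coboundaryDist_le_sum_cone hf ((haut g).isGraded_pushChain hφ)).trans_eq ?_)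
    rw [(haut g).cobdry_pushChain]
    rfl
  rw [← ENNReal.mul_le_mul_iff_right (Nat.cast_ne_zero.mpr (Fintype.card_ne_zero (α := G)))
    (ENNReal.natCast_ne_top _)]
  calc (Fintype.card G : ℝ≥0∞) * X.coboundaryDist n k φ
      = ∑ _g : G, X.coboundaryDist n k φ := by simp
    _ ≤ ∑ g : G, ∑ τ ∈ X.cfaces (k + 1),
          X.wE n τ * #{η ∈ X.supp (f τ) | X.cobdry φ (η.image (ρ g)) ≠ 0} :=
        sum_le_sum fun g _ => hdist g
    _ = ∑ τ ∈ X.cfaces (k + 1), X.wE n τ *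
          ∑ g : G, (#{η ∈ X.supp (f τ) | X.cobdry φ (η.image (ρ g)) ≠ 0} : ℝ≥0∞) := by
        rw [sum_comm]
        simp only [mul_sum]
    _ ≤ ∑ τ ∈ X.cfaces (k + 1), X.wE n τ *
          (M * (Fintype.card G * X.topStarDensity n (X.cobdry φ))) := by
        gcongr with τ hτ
        refine (sum_card_supp_filter_image_ne_zero_le hpure hface htrans _ _).trans ?_
        gcongr
        exact hM τ hτ
    _ ≤ 1 * (M * (Fintype.card G * X.topStarDensity n (X.cobdry φ))) := by
        rw [← sum_mul]
        gcongr
        exact X.sum_wE_cfaces_le_one n (k + 1)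
    _ = Fintype.card G * (M * X.topStarDensity n (X.cobdry φ)) := by
        rw [one_mul, mul_left_comm]

end Transitive

theorem Pure.exists_singleton_mem_faces (hpure : X.Pure n) : ∃ v, {v} ∈ X.faces := by
  obtain ⟨σ, hσ, -⟩ := hpure ∅ X.empty_mem
  obtain ⟨hface, hcard⟩ := mem_cfaces.mp hσ
  obtain ⟨v, hv⟩ := card_pos.mp (by omega : 0 < #σ)
  exact ⟨v, X.down_closed σ hface _ (singleton_subset_iff.mpr hv)⟩

end SCplx

open SCplx in
theorem stmt6_general {V : Type} [DecidableEq V] (n : ℕ) (X : SCplx V) (hpure : X.Pure n)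
    {G : Type*} [Group G] [Finite G] (ρ : G →* Equiv.Perm V)
    (hface : ∀ (g : G), ∀ σ ∈ X.faces, σ.image (ρ g) ∈ X.faces)
    (htrans : ∀ σ ∈ X.cfaces (n + 1), ∀ τ ∈ X.cfaces (n + 1), ∃ g : G, σ.image (ρ g) = τ)
    (k : ℕ) (hk : k < n)
    (hSys : ∀ j ≤ k, ((j : ℕ∞) + 1) * X.Mconst j + 1 < X.Sys j)
    (φ : Finset V → ZMod 2) (hφ : X.IsGraded (k + 1) φ) :
    (((k + 2 : ℕ) : ℝ≥0∞) / (((n + 1).choose (k + 1) : ℝ≥0∞) * (X.Mconst (k + 1) : ℝ≥0∞))) *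
        X.coboundaryDist n k φ ≤ X.wCE n (X.cobdry φ) := by
  obtain ⟨v, hv⟩ := hpure.exists_singleton_mem_faces
  have hcone := fun τ (hτ : τ ∈ X.cfaces (k + 1)) =>
    isConeAt_cone hv (fun j hj => hSys j (Nat.lt_succ_iff.mp hj)) hτ
  have hdist : X.coboundaryDist n k φ ≤
      (X.Mconst (k + 1) : ℝ≥0∞) * X.topStarDensity n (X.cobdry φ) :=
    coboundaryDist_le_mul_topStarDensity hpure hface htrans (fun τ hτ => (hcone τ hτ).1.bdry_eq)
      (fun τ hτ => by simpa using ENat.toENNReal_le.mpr (hcone τ hτ).2) hφ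
  have hdensity : ((k + 2 : ℕ) : ℝ≥0∞) * X.topStarDensity n (X.cobdry φ) ≤
      (n + 1).choose (k + 1) * X.wCE n (X.cobdry φ) := by
    exact_mod_cast topStarDensity_le_of_cobdry_eq_zero hk hφ.cobdry (X.cobdry_cobdry φ)
  rw [← ENNReal.mul_div_right_comm]
  refine ENNReal.div_le_of_le_mul ?_
  calc ((k + 2 : ℕ) : ℝ≥0∞) * X.coboundaryDist n k φ
      ≤ (k + 2 : ℕ) * (X.Mconst (k + 1) * X.topStarDensity n (X.cobdry φ)) := by gcongr
    _ = X.Mconst (k + 1) * ((k + 2 : ℕ) * X.topStarDensity n (X.cobdry φ)) := mul_left_comm _ _ _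
    _ ≤ X.Mconst (k + 1) * ((n + 1).choose (k + 1) * X.wCE n (X.cobdry φ)) := by gcongr
    _ = X.wCE n (X.cobdry φ) * ((n + 1).choose (k + 1) * X.Mconst (k + 1)) := by ring

open SCplx in
/-- For a strongly symmetric pure finite `n`-dimensional complex, with
`M_{-1} = 1`, `M_k = Fill_k((k+1)M_{k-1}+1)` (so `Mconst X (k+1) = M_k`): if
`Sys_j(X) > (j+1)·M_{j-1}+1` for all `0 ≤ j ≤ k`, then `Exp^k_b(X) ≥ 1/(C(n+1,k+1)·M_k)`,
stated pointwise: for every `k`-cochain `φ ∉ B^k(X)`,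
`(1/(C(n+1,k+1)·M_k)) · dist(φ,B^k(X)) ≤ w(d_k φ)`. -/
theorem stmt6 {V : Type} [DecidableEq V] (n : ℕ) (X : SCplx V) (hpure : X.Pure n)
    {G : Type} [Group G] [Fintype G] (ρ : G →* Equiv.Perm V)
    (hface : ∀ (g : G), ∀ σ ∈ X.faces, σ.image (ρ g) ∈ X.faces)
    (htrans : ∀ σ ∈ X.cfaces (n + 1), ∀ τ ∈ X.cfaces (n + 1), ∃ g : G, σ.image (ρ g) = τ)
    (k : ℕ) (hk : k < n)
    (hSys : ∀ j ≤ k, ((j : ℕ∞) + 1) * X.Mconst j + 1 < X.Sys j) :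
    ∀ φ : Finset V → ZMod 2, X.IsGraded (k + 1) φ → ¬X.IsCoboundary k φ →
      (1 / (((n + 1).choose (k + 1) : ℝ≥0∞) * (X.Mconst (k + 1) : ℝ≥0∞))) *
          sInf {r : ℝ≥0∞ | ∃ ψ, X.IsCoboundary k ψ ∧ r = X.wCE n (φ + ψ)} ≤
        X.wCE n (X.cobdry φ) := by
  intro φ hφ _
  have hone : (1 : ℝ≥0∞) ≤ ((k + 2 : ℕ) : ℝ≥0∞) := by exact_mod_cast Nat.succ_pos (k + 1)
  exact (mul_le_mul_left (ENNReal.div_le_div_right hone _) _).trans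
    (stmt6_general n X hpure ρ hface htrans k hk hSys φ hφ)
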